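/- arXiv:1907.07801 — 9 statements merged into one kernel-verified Lean document; each statement's English description precedes it below -/
import Mathlib

section
/- The operation * on 𝒬 is associative, and for U, V, W ∈ 𝒬 the triple product is given explicitly by U * V * W = {A ∪ B ∪ C : A ∈ U, B ∈ V, C ∈ W, A ∠ B, A ∠ C, B ∠ C}. -/
def Angle {n : ℕ} (A B : Set (Fin n)) : Prop := ∀ a ∈ A, ∀ b ∈ B, a ≤ b

def UpClosed {n : ℕ} (U : Set (Set (Fin n))) : Prop :=
  ∀ ⦃A B : Set (Fin n)⦄, A ∈ U → A ⊆ B → B ∈ U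

def QStar {n : ℕ} (U V : Set (Set (Fin n))) : Set (Set (Fin n)) :=
  {C | ∃ A ∈ U, ∃ B ∈ V, Angle A B ∧ C = A ∪ B}

theorem stmt1 {n : ℕ} (hn : 1 ≤ n) (U V W : Set (Set (Fin n)))
    (hU : UpClosed U) (hV : UpClosed V) (hW : UpClosed W) :
    QStar (QStar U V) W = QStar U (QStar V W) ∧
      QStar (QStar U V) W =
        {D | ∃ A ∈ U, ∃ B ∈ V, ∃ C ∈ W,
          Angle A B ∧ Angle A C ∧ Angle B C ∧ D = A ∪ B ∪ C} := by
  have h1 : QStar (QStar U V) W =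
        {D | ∃ A ∈ U, ∃ B ∈ V, ∃ C ∈ W,
          Angle A B ∧ Angle A C ∧ Angle B C ∧ D = A ∪ B ∪ C} := by
    ext D
    constructor
    · rintro ⟨E, ⟨A, hA, B, hB, hAB, rfl⟩, C, hC, hEC, rfl⟩
      exact ⟨A, hA, B, hB, C, hC, hAB, fun a ha c hc => hEC a (Or.inl ha) c hc,
        fun b hb c hc => hEC b (Or.inr hb) c hc, rfl⟩
    · rintro ⟨A, hA, B, hB, C, hC, hAB, hAC, hBC, rfl⟩
      exact ⟨A ∪ B, ⟨A, hA, B, hB, hAB, rfl⟩, C, hC,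
        fun x hx c hc => hx.elim (fun h => hAC x h c hc) (fun h => hBC x h c hc), rfl⟩
  refine ⟨?_, h1⟩
  rw [h1]
  ext D
  constructor
  · rintro ⟨A, hA, B, hB, C, hC, hAB, hAC, hBC, rfl⟩
    exact ⟨A, hA, B ∪ C, ⟨B, hB, C, hC, hBC, rfl⟩,
      fun a ha x hx => hx.elim (fun h => hAB a ha x h) (fun h => hAC a ha x h),
      Set.union_assoc A B C⟩
  · rintro ⟨A, hA, E, ⟨B, hB, C, hC, hBC, rfl⟩, hAE, rfl⟩
    exact ⟨A, hA, B, hB, C, hC, fun a ha b hb => hAE a ha b (Or.inl hb),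
      fun a ha c hc => hAE a ha c (Or.inr hc), hBC, (Set.union_assoc A B C).symm⟩
end

section
/- Let 𝔸 = (A₁, …, A_r) be a (nonempty) list of subsets of N. Then the set T(𝔸) of thread sets of 𝔸 equals the iterated product vA₁ * vA₂ * ⋯ * vA_r in 𝒬. -/
/-- `vA = {B : B ∩ A ≠ ∅}`. -/
def VSet {n : ℕ} (A : Set (Fin n)) : Set (Set (Fin n)) := {B | (B ∩ A).Nonempty}

/-- `t` is a thread for the list `𝔸`: it has the same length, `tᵢ ∈ Aᵢ` for all `i`,
and `t₁ ≤ t₂ ≤ ⋯ ≤ t_r`. -/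
def IsThread {n : ℕ} (𝔸 : List (Set (Fin n))) (t : List (Fin n)) : Prop :=
  List.Forall₂ (fun a A => a ∈ A) t 𝔸 ∧ List.Chain' (· ≤ ·) t

/-- `T(𝔸)`: the set of thread sets of `𝔸`, i.e. subsets of `N` containing
all entries of some thread for `𝔸`. -/
def ThreadSets {n : ℕ} (𝔸 : List (Set (Fin n))) : Set (Set (Fin n)) :=
  {S | ∃ t : List (Fin n), IsThread 𝔸 t ∧ ∀ a ∈ t, a ∈ S}

theorem threadSets_append {n : ℕ} (L : List (Set (Fin n))) (B : Set (Fin n)) :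
    ThreadSets (L ++ [B]) = QStar (ThreadSets L) (VSet B) := by
  ext S
  constructor
  · rintro ⟨t, ⟨h1, h2⟩, h3⟩
    have h2' : t.Pairwise (· ≤ ·) := List.isChain_iff_pairwise.mp h2
    have h1' := List.rel_reverse h1
    rw [List.reverse_append, List.reverse_singleton, List.singleton_append,
      List.forall₂_cons_right_iff] at h1'
    obtain ⟨b, u, hb, hu, hrev⟩ := h1'
    have ht : t = u.reverse ++ [b] := by
      rw [← List.reverse_reverse t, hrev, List.reverse_cons]
    subst ht
    have hu' := List.rel_reverse hu
    rw [List.reverse_reverse] at hu'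
    rw [List.pairwise_append] at h2'
    obtain ⟨p1, -, p3⟩ := h2'
    have hbS : b ∈ S := h3 b (by simp)
    refine ⟨{s | s ∈ S ∧ s ≤ b}, ⟨u.reverse, ⟨hu', List.isChain_iff_pairwise.mpr p1⟩, ?_⟩,
      {s | s ∈ S ∧ b ≤ s}, ⟨b, ⟨hbS, le_refl b⟩, hb⟩, ?_, ?_⟩
    · intro a ha
      exact ⟨h3 a (List.mem_append_left _ ha), p3 a ha b (by simp)⟩
    · intro x hx y hy
      exact hx.2.trans hy.2
    · ext s
      constructor
      · intro hs
        rcases le_total s b with h | h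
        · exact Or.inl ⟨hs, h⟩
        · exact Or.inr ⟨hs, h⟩
      · rintro (h | h)
        · exact h.1
        · exact h.1
  · rintro ⟨X, ⟨t, ⟨h1, h2⟩, h3⟩, Y, ⟨b, hbY, hbB⟩, hXY, rfl⟩
    refine ⟨t ++ [b], ⟨List.rel_append h1 (List.Forall₂.cons hbB List.Forall₂.nil), ?_⟩, ?_⟩
    · refine List.isChain_iff_pairwise.mpr ?_
      rw [List.pairwise_append]
      refine ⟨List.isChain_iff_pairwise.mp h2, by simp, ?_⟩
      intro a ha c hc
      rw [List.mem_singleton] at hc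
      subst hc
      exact hXY a (h3 a ha) c hbY
    · intro a ha
      rw [List.mem_append, List.mem_singleton] at ha
      rcases ha with ha | rfl
      · exact Or.inl (h3 a ha)
      · exact Or.inr hbY

theorem threadSets_singleton {n : ℕ} (A : Set (Fin n)) : ThreadSets [A] = VSet A := by
  ext S
  constructor
  · rintro ⟨t, ⟨h1, -⟩, h3⟩
    rw [List.forall₂_cons_right_iff] at h1
    obtain ⟨b, u, hb, -, rfl⟩ := h1
    exact ⟨b, h3 b (by simp), hb⟩
  · rintro ⟨b, hS, hA⟩
    refine ⟨[b], ⟨List.Forall₂.cons hA List.Forall₂.nil, List.isChain_singleton b⟩, ?_⟩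
    simpa using hS

theorem stmt6 {n : ℕ} (hn : 1 ≤ n) (A : Set (Fin n)) (l : List (Set (Fin n))) :
    ThreadSets (A :: l) = List.foldl QStar (VSet A) (l.map VSet) := by
  induction l using List.reverseRecOn with
  | nil => exact threadSets_singleton A
  | append_singleton l B ih =>
    rw [← List.cons_append, threadSets_append, ih, List.map_append, List.foldl_append]
    rfl
end

section
/- Take n* = 3, so N = {0,1,2}, and let U = {{0,1}, {1,2}, {0,1,2}} ∈ 𝒬. Then for every list 𝔸 = (A₁, …, A_r) of subsets of N one has T(𝔸) ≠ U. Indeed, for any list 𝔸, if {0,1} ∈ T(𝔸) and {1,2} ∈ T(𝔸) and {1} ∉ T(𝔸), then {0,2} ∈ T(𝔸). Equivalently, U does not lie in the submonoid of (𝒬, *) generated by the elements vA for A ⊆ N. -/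
def USet {n : ℕ} (A : Set (Fin n)) : Set (Set (Fin n)) := {B | A ⊆ B}

theorem isThread_nil_iff {n : ℕ} (t : List (Fin n)) : IsThread [] t ↔ t = [] := by
  unfold IsThread
  constructor
  · rintro ⟨h, -⟩
    cases h
    rfl
  · rintro rfl
    exact ⟨List.Forall₂.nil, List.IsChain.nil⟩

theorem isThread_cons {n : ℕ} (A : Set (Fin n)) (L : List (Set (Fin n))) (a : Fin n)
    (t : List (Fin n)) :
    IsThread (A :: L) (a :: t) ↔ a ∈ A ∧ (∀ b ∈ t, a ≤ b) ∧ IsThread L t := by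
  unfold IsThread
  rw [List.forall₂_cons]
  simp only [List.Chain', List.isChain_iff_pairwise, List.pairwise_cons]
  tauto

theorem ts_key (L : List (Set (Fin 3))) :
    ({0, 1} : Set (Fin 3)) ∈ ThreadSets L → ({1, 2} : Set (Fin 3)) ∈ ThreadSets L →
    ({1} : Set (Fin 3)) ∈ ThreadSets L ∨ ({0, 2} : Set (Fin 3)) ∈ ThreadSets L := by
  induction L with
  | nil =>
    intro _ _
    exact Or.inl ⟨[], (isThread_nil_iff _).2 rfl, by simp⟩
  | cons A L ih =>
    rintro ⟨t, ht, hts⟩ ⟨u, hu, hus⟩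
    rcases t with _ | ⟨a, t⟩
    · exact absurd ht.1 (by simp)
    rcases u with _ | ⟨b, u⟩
    · exact absurd hu.1 (by simp)
    have hts' := hts
    have hus' := hus
    have ht0 := ht
    have hu0 := hu
    rw [isThread_cons] at ht hu
    simp only [List.mem_cons, forall_eq_or_imp, Set.mem_insert_iff, Set.mem_singleton_iff]
      at hts hus
    obtain ⟨haA, hat, htL⟩ := ht
    obtain ⟨hbA, hbu, huL⟩ := hu
    obtain ⟨ha, hts⟩ := hts
    obtain ⟨hb, hus⟩ := hus
    rcases hb with rfl | rfl
    · rcases ha with rfl | rfl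
      · rcases ih ⟨t, htL, fun x hx => hts x hx⟩ ⟨u, huL, fun x hx => hus x hx⟩ with
          ⟨w, hw, hws⟩ | ⟨w, hw, hws⟩
        · left
          refine ⟨1 :: w, (isThread_cons _ _ _ _).2 ⟨hbA, ?_, hw⟩, ?_⟩
          · intro x hx
            have := hws x hx
            simp only [Set.mem_singleton_iff] at this
            exact this.ge
          · intro x hx
            rcases List.mem_cons.1 hx with rfl | hx
            · simp
            · exact hws x hx
        · right
          refine ⟨0 :: w, (isThread_cons _ _ _ _).2 ⟨haA, ?_, hw⟩, ?_⟩
          · intro x hx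
            exact Fin.zero_le x
          · intro x hx
            rcases List.mem_cons.1 hx with rfl | hx
            · simp
            · exact hws x hx
      · left
        refine ⟨1 :: t, ht0, ?_⟩
        intro x hx
        rcases List.mem_cons.1 hx with rfl | hx
        · simp
        · have h1 := hat x hx
          rcases hts x hx with rfl | rfl
          · exact absurd h1 (by decide)
          · simp
    · right
      refine ⟨2 :: u, hu0, ?_⟩
      intro x hx
      rcases List.mem_cons.1 hx with rfl | hx
      · simp
      · have h1 := hbu x hx
        rcases hus x hx with rfl | rfl
        · exact absurd h1 (by decide)
        · simp

theorem isThread_snoc {n : ℕ} (A : Set (Fin n)) (L : List (Set (Fin n)))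
    (t : List (Fin n)) :
    IsThread (L ++ [A]) t ↔
      ∃ s a, t = s ++ [a] ∧ a ∈ A ∧ (∀ b ∈ s, b ≤ a) ∧ IsThread L s := by
  induction L generalizing t with
  | nil =>
    rcases t with _ | ⟨c, t⟩
    · simp [IsThread]
    · rw [List.nil_append, isThread_cons, isThread_nil_iff]
      constructor
      · rintro ⟨h, -, rfl⟩
        exact ⟨[], c, rfl, h, by simp, (isThread_nil_iff _).2 rfl⟩
      · rintro ⟨s, a, e, h, -, hs⟩
        rw [isThread_nil_iff] at hs
        subst hs
        simp only [List.nil_append, List.cons.injEq] at e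
        obtain ⟨rfl, rfl⟩ := e
        simp [h]
  | cons B L ih =>
    rcases t with _ | ⟨c, t⟩
    · simp [IsThread]
    · rw [List.cons_append, isThread_cons, ih]
      constructor
      · rintro ⟨hc, hct, s, a, rfl, ha, hsa, hs⟩
        refine ⟨c :: s, a, rfl, ha, ?_, (isThread_cons _ _ _ _).2 ⟨hc, ?_, hs⟩⟩
        · intro b hb
          rcases List.mem_cons.1 hb with rfl | hb
          · exact hct a (by simp)
          · exact hsa b hb
        · intro b hb
          exact hct b (by simp [hb])
      · rintro ⟨s, a, e, ha, hsa, hs⟩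
        rcases s with _ | ⟨d, s⟩
        · exact absurd hs.1 (by simp)
        simp only [List.cons_append, List.cons.injEq] at e
        obtain ⟨rfl, rfl⟩ := e
        rw [isThread_cons] at hs
        refine ⟨hs.1, ?_, s, a, rfl, ha, fun b hb => hsa b (by simp [hb]), hs.2.2⟩
        intro b hb
        rcases List.mem_append.1 hb with hb | hb
        · exact hs.2.1 b hb
        · rw [List.mem_singleton.1 hb]
          exact hsa c (by simp)

theorem ts_foldl {n : ℕ} (L : List (Set (Fin n))) :
    List.foldl QStar (USet (∅ : Set (Fin n))) (L.map VSet) = ThreadSets L := by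
  induction L using List.reverseRecOn with
  | nil =>
    ext S
    simp [USet, ThreadSets, isThread_nil_iff]
  | append_singleton L A ih =>
    rw [List.map_append, List.foldl_append, ih]
    ext S
    simp only [List.map_cons, List.map_nil, List.foldl_cons, List.foldl_nil]
    constructor
    · rintro ⟨P, ⟨t, ht, htP⟩, B, ⟨b, hbB, hbA⟩, hang, rfl⟩
      refine ⟨t ++ [b], (isThread_snoc _ _ _).2
        ⟨t, b, rfl, hbA, fun x hx => hang x (htP x hx) b hbB, ht⟩, ?_⟩
      intro x hx
      rcases List.mem_append.1 hx with hx | hx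
      · exact Or.inl (htP x hx)
      · rw [List.mem_singleton.1 hx]
        exact Or.inr hbB
    · rintro ⟨t, ht, htS⟩
      obtain ⟨s, a, rfl, ha, hsa, hs⟩ := (isThread_snoc _ _ _).1 ht
      have haS : a ∈ S := htS a (by simp)
      refine ⟨{x | x ∈ S ∧ x ≤ a}, ⟨s, hs, fun x hx => ⟨htS x (by simp [hx]), hsa x hx⟩⟩,
        {x | x ∈ S ∧ a ≤ x}, ⟨a, ⟨haS, le_rfl⟩, ha⟩, ?_, ?_⟩
      · intro x hx y hy
        exact hx.2.trans hy.2
      · ext x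
        have := le_total x a
        simp only [Set.mem_union, Set.mem_setOf_eq]
        tauto

theorem ts_ne (L : List (Set (Fin 3))) : ThreadSets L ≠
    {({0, 1} : Set (Fin 3)), ({1, 2} : Set (Fin 3)), ({0, 1, 2} : Set (Fin 3))} := by
  intro h
  have hk := ts_key L
  rw [h] at hk
  rcases hk (by simp) (by simp) with h1 | h1
  · rcases h1 with h1 | h1 | h1
    · have := (Set.ext_iff.1 h1 0).2 (by simp)
      simp at this
    · have := (Set.ext_iff.1 h1 2).2 (by simp)
      simp at this
    · have := (Set.ext_iff.1 h1 0).2 (by simp)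
      simp at this
  · rcases h1 with h1 | h1 | h1 <;>
    · have := (Set.ext_iff.1 h1 1).2 (by simp)
      simp at this

theorem stmt8 :
    let U : Set (Set (Fin 3)) :=
      {({0, 1} : Set (Fin 3)), ({1, 2} : Set (Fin 3)), ({0, 1, 2} : Set (Fin 3))}
    (∀ 𝔸 : List (Set (Fin 3)), ThreadSets 𝔸 ≠ U) ∧
      (∀ 𝔸 : List (Set (Fin 3)),
        ({0, 1} : Set (Fin 3)) ∈ ThreadSets 𝔸 →
        ({1, 2} : Set (Fin 3)) ∈ ThreadSets 𝔸 →
        ({1} : Set (Fin 3)) ∉ ThreadSets 𝔸 →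
        ({0, 2} : Set (Fin 3)) ∈ ThreadSets 𝔸) ∧
      ¬ ∃ l : List (Set (Fin 3)),
        List.foldl QStar (USet (∅ : Set (Fin 3))) (l.map VSet) = U := by
  intro U
  refine ⟨ts_ne, fun L h1 h2 h3 => (ts_key L h1 h2).resolve_left h3, ?_⟩
  rintro ⟨l, hl⟩
  rw [ts_foldl] at hl
  exact ts_ne l hl
end

section
/- For subsets A, B ⊆ N one has uA * uB = u(A ∪ B) if A ∠ B, and uA * uB = ∅ otherwise. -/
theorem stmt9 {n : ℕ} (hn : 1 ≤ n) (A B : Set (Fin n)) :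
    (Angle A B → QStar (USet A) (USet B) = USet (A ∪ B)) ∧
      (¬ Angle A B → QStar (USet A) (USet B) = ∅) := by
  constructor
  · intro h
    ext C
    constructor
    · rintro ⟨A', hA, B', hB, -, rfl⟩
      exact Set.union_subset_union hA hB
    · intro hC
      have hC' : A ∪ B ⊆ C := hC
      refine ⟨{c | c ∈ C ∧ ∀ b ∈ B, c ≤ b},
        fun a ha => ⟨hC' (Or.inl ha), h a ha⟩,
        {c | c ∈ C ∧ ∀ a, (a ∈ C ∧ ∀ b ∈ B, a ≤ b) → a ≤ c},
        fun b hb => ⟨hC' (Or.inr hb), fun a ha => ha.2 b hb⟩,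
        fun a ha b hb => hb.2 a ha, ?_⟩
      ext c
      constructor
      · intro hc
        by_cases h1 : ∀ b ∈ B, c ≤ b
        · exact Or.inl ⟨hc, h1⟩
        · push Not at h1
          obtain ⟨b, hb, hbc⟩ := h1
          exact Or.inr ⟨hc, fun a ha => (ha.2 b hb).trans hbc.le⟩
      · rintro (hc | hc)
        · exact hc.1
        · exact hc.1
  · intro h
    rw [Set.eq_empty_iff_forall_notMem]
    rintro C ⟨A', hA, B', hB, hAB, -⟩
    exact h fun a ha b hb => hAB a (hA ha) b (hB hb)
end

section
/- Let U, V be upward-closed subsets of 𝒫 and let C ∈ U*V. Then the poset σ/C = {(A,B) : A ∈ U, B ∈ V, A ∠ B, A ∪ B ⊆ C}, ordered componentwise by inclusion, is strongly contractible. (This says the map σ(A,B) = A ∪ B from U ⊛ V = {(A,B) ∈ U × V : A ∠ B} to U*V is homotopy cofinal.) -/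
/-- A poset is strongly contractible if its identity is related to a constant map by the
reflexive-transitive closure of pointwise comparability of monotone self-maps. -/
def StronglyContractible (P : Type*) [Preorder P] : Prop :=
  ∃ p : P, Relation.ReflTransGen (fun f g : P →o P => f ≤ g ∨ g ≤ f)
    OrderHom.id ((OrderHom.const P) p)

def DownIn {n : ℕ} (C A : Set (Fin n)) : Set (Fin n) := {c | c ∈ C ∧ ∃ a ∈ A, c ≤ a}

theorem downIn_total {n : ℕ} (C A B : Set (Fin n)) :
    DownIn C A ⊆ DownIn C B ∨ DownIn C B ⊆ DownIn C A := by
  by_contra! h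
  obtain ⟨h1, h2⟩ := h
  obtain ⟨x, hx, hx'⟩ := Set.not_subset.1 h1
  obtain ⟨y, hy, hy'⟩ := Set.not_subset.1 h2
  obtain ⟨hxC, a, ha, hxa⟩ := hx
  obtain ⟨hyC, b, hb, hyb⟩ := hy
  rcases le_total x y with h | h
  · exact hx' ⟨hxC, b, hb, h.trans hyb⟩
  · exact hy' ⟨hyC, a, ha, h.trans hxa⟩

theorem exists_least {n : ℕ} (U : Set (Set (Fin n))) (hU : UpClosed U) (C : Set (Fin n))
    (h : ∃ A ∈ U, A ⊆ C) :
    ∃ A₀ ∈ U, A₀ ⊆ C ∧ ∀ A ∈ U, A ⊆ C → A₀ ⊆ DownIn C A := by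
  obtain ⟨A, hA, hAC⟩ := h
  obtain ⟨M, hM⟩ := (Set.toFinite {D | ∃ A ∈ U, A ⊆ C ∧ D = DownIn C A}).exists_minimal
    ⟨_, A, hA, hAC, rfl⟩
  obtain ⟨A₁, hA₁, hA₁C, rfl⟩ := hM.1
  refine ⟨DownIn C A₁, hU hA₁ fun x hx => ⟨hA₁C hx, x, hx, le_rfl⟩, fun x hx => hx.1, fun B hB hBC => ?_⟩
  rcases downIn_total C A₁ B with h | h
  · exact h
  · exact hM.2 ⟨B, hB, hBC, rfl⟩ h

/-- The comma poset `σ/C` for `σ : U ⊛ V → U*V`, `σ(A,B) = A ∪ B`, is strongly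
contractible; i.e. `σ` is homotopy cofinal. -/
theorem stmt10 {n : ℕ} (hn : 1 ≤ n) (U V : Set (Set (Fin n)))
    (hU : UpClosed U) (hV : UpClosed V) (C : Set (Fin n)) (hC : C ∈ QStar U V) :
    StronglyContractible
      {p : Set (Fin n) × Set (Fin n) //
        p.1 ∈ U ∧ p.2 ∈ V ∧ Angle p.1 p.2 ∧ p.1 ∪ p.2 ⊆ C} := by
  obtain ⟨A, hA, B, hB, hAB, hCe⟩ := hC
  have hAC : A ⊆ C := hCe ▸ Set.subset_union_left
  have hBC : B ⊆ C := hCe ▸ Set.subset_union_right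
  obtain ⟨A₀, hA₀, hA₀C, hmin⟩ := exists_least U hU C ⟨A, hA, hAC⟩
  have key : ∀ A ∈ U, A ⊆ C → ∀ B, Angle A B → Angle A₀ B := by
    intro A hA hAC B hAB x hx b hb
    obtain ⟨_, a, ha, hxa⟩ := hmin A hA hAC hx
    exact hxa.trans (hAB a ha b hb)
  let B₁ : Set (Fin n) := {c | c ∈ C ∧ ∀ a ∈ A₀, a ≤ c}
  have hB₁ : B₁ ∈ V := hV hB fun b hb => ⟨hBC hb, fun a ha => key A hA hAC B hAB a ha b hb⟩
  let P := {p : Set (Fin n) × Set (Fin n) //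
        p.1 ∈ U ∧ p.2 ∈ V ∧ Angle p.1 p.2 ∧ p.1 ∪ p.2 ⊆ C}
  have l : ∀ p : P, p.1.1 ⊆ C := fun p => Set.subset_union_left.trans p.2.2.2.2
  have r : ∀ p : P, p.1.2 ⊆ C := fun p => Set.subset_union_right.trans p.2.2.2.2
  have e : ∀ p : P, p.1.1 ⊆ DownIn C p.1.1 := fun p x hx => ⟨l p hx, x, hx, le_rfl⟩
  let q : P := ⟨(A₀, B₁), hA₀, hB₁, fun a ha b hb => hb.2 a ha,
    Set.union_subset hA₀C fun x hx => hx.1⟩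
  have ang : ∀ p : P, Angle (DownIn C p.1.1) p.1.2 := by
    intro p c hc b hb
    obtain ⟨_, a, ha, hca⟩ := hc
    exact hca.trans (p.2.2.2.1 a ha b hb)
  have mono : ∀ A B : Set (Fin n), A ⊆ B → DownIn C A ⊆ DownIn C B := by
    intro A B h x hx
    obtain ⟨hxC, a, ha, hxa⟩ := hx
    exact ⟨hxC, a, h ha, hxa⟩
  let f : P →o P :=
    { toFun := fun p => ⟨(DownIn C p.1.1, p.1.2), hU p.2.1 (e p), p.2.2.1, ang p,
        Set.union_subset (fun x hx => hx.1) (r p)⟩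
      monotone' := fun p p' h => ⟨mono _ _ h.1, h.2⟩ }
  let g : P →o P :=
    { toFun := fun p => ⟨(A₀, p.1.2), hA₀, p.2.2.1, key _ p.2.1 (l p) _ p.2.2.2.1,
        Set.union_subset hA₀C (r p)⟩
      monotone' := fun p p' h => ⟨le_rfl, h.2⟩ }
  refine ⟨q, ?_⟩
  refine ((Relation.ReflTransGen.single (b := f) (Or.inl ?_)).tail (c := g) (Or.inr ?_)).tail
    (Or.inl ?_)
  · exact fun p => ⟨e p, le_rfl⟩
  · exact fun p => ⟨hmin _ p.2.1 (l p), le_rfl⟩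
  · exact fun p => ⟨le_rfl, fun b hb =>
      ⟨r p hb, fun a ha => key _ p.2.1 (l p) _ p.2.2.2.1 a ha b hb⟩⟩
end

section
/- Let U, V be upward-closed subsets of 𝒫 and let C ∈ U*V. Then the poset C/σ = {(A,B) : A ∈ U, B ∈ V, A ∠ B, C ⊆ A ∪ B}, ordered componentwise by inclusion, is strongly contractible. (This says the map σ(A,B) = A ∪ B from U ⊛ V = {(A,B) ∈ U × V : A ∠ B} to U*V is homotopy final.) -/
/-- The comma poset `C/σ` for `σ : U ⊛ V → U*V`, `σ(A,B) = A ∪ B`, is strongly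
contractible; i.e. `σ` is homotopy final. -/
theorem stmt11 {n : ℕ} (hn : 1 ≤ n) (U V : Set (Set (Fin n)))
    (hU : UpClosed U) (hV : UpClosed V) (C : Set (Fin n)) (hC : C ∈ QStar U V) :
    StronglyContractible
      {p : Set (Fin n) × Set (Fin n) //
        p.1 ∈ U ∧ p.2 ∈ V ∧ Angle p.1 p.2 ∧ C ⊆ p.1 ∪ p.2} := by
  classical
  obtain ⟨A0, hA0, B0, hB0, hAB, hCe⟩ := hC
  have hex : ∃ k : ℕ, {i : Fin n | i.val < k} ∈ U :=
    ⟨n, hU hA0 (fun i _ => i.isLt)⟩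
  obtain ⟨p, hp, hmin⟩ : ∃ p : ℕ, {i : Fin n | i.val < p} ∈ U ∧
      ∀ m < p, {i : Fin n | i.val < m} ∉ U :=
    ⟨Nat.find hex, Nat.find_spec hex, fun m hm => Nat.find_min hex hm⟩
  have hpn : p ≤ n := by
    by_contra h
    exact hmin n (by omega) (hU hA0 (fun i _ => i.isLt))
  have hL : ∀ k, p ≤ k → {i : Fin n | i.val < k} ∈ U := fun k hk =>
    hU hp (fun i (hi : i.val < p) => lt_of_lt_of_le hi hk)
  let P := {p : Set (Fin n) × Set (Fin n) //
        p.1 ∈ U ∧ p.2 ∈ V ∧ Angle p.1 p.2 ∧ C ⊆ p.1 ∪ p.2}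
  let G : ∀ k j : ℕ, p ≤ k → k ≤ j → j ≤ k + 1 → (P →o P) := fun k j hk hkj hjk =>
    { toFun := fun x => ⟨({i | (∃ a ∈ x.1.1, i ≤ a) ∧ i.val < k},
          {i | (∃ b ∈ x.1.2, b ≤ i) ∨ j ≤ i.val + 1}), by
        obtain ⟨⟨A, B⟩, hA, hB, hab, hc⟩ := x
        refine ⟨?_, ?_, ?_, ?_⟩
        · by_cases h : ∃ a ∈ A, k ≤ a.val
          · obtain ⟨a, ha, hka⟩ := h
            refine hU (hL k hk) ?_
            intro i hi
            have hi' : i.val < k := hi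
            exact ⟨⟨a, ha, Fin.le_def.2 (by omega)⟩, hi'⟩
          · push Not at h
            exact hU hA (fun i hi => ⟨⟨i, hi, le_refl i⟩, h i hi⟩)
        · exact hV hB (fun i hi => Or.inl ⟨i, hi, le_refl i⟩)
        · rintro a ⟨⟨a', ha', haa⟩, hak⟩ b (⟨b', hb', hbb⟩ | hb)
          · exact haa.trans ((hab a' ha' b' hb').trans hbb)
          · exact Fin.le_def.2 (by omega)
        · intro c hcc
          rcases hc hcc with h | h
          · by_cases hck : c.val < k
            · exact Or.inl ⟨⟨c, h, le_refl c⟩, hck⟩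
            · refine Or.inr (Or.inr ?_)
              omega
          · exact Or.inr (Or.inl ⟨c, h, le_refl c⟩)⟩
      monotone' := by
        intro x y hxy
        refine ⟨?_, ?_⟩
        · rintro i ⟨⟨a, ha, hi⟩, hik⟩
          exact ⟨⟨a, hxy.1 ha, hi⟩, hik⟩
        · rintro i (⟨b, hb, hi⟩ | hi)
          · exact Or.inl ⟨b, hxy.2 hb, hi⟩
          · exact Or.inr hi }
  let x0 : P := ⟨(A0, B0), hA0, hB0, hAB, hCe.le⟩
  have hconst : ∀ x : P, (G p p le_rfl le_rfl (by omega)) x =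
      ⟨({i | i.val < p}, {i | p ≤ i.val + 1}), hp, by
        have key : ∀ m, p = m + 1 → ∃ a ∈ A0, m ≤ a.val := by
          intro m hm
          by_contra h
          push Not at h
          exact hmin m (by omega) (hU hA0 (fun i hi => h i hi))
        refine hV hB0 (fun b hb => ?_)
        show p ≤ b.val + 1
        rcases p with _ | m
        · omega
        · obtain ⟨a, ha, hma⟩ := key m rfl
          have := Fin.le_def.1 (hAB a ha b hb)
          omega, by
        intro a ha b hb
        have ha' : a.val < p := ha
        have hb' : p ≤ b.val + 1 := hb
        exact Fin.le_def.2 (by omega), by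
        intro c _
        by_cases h : c.val < p
        · exact Or.inl h
        · refine Or.inr ?_
          show p ≤ c.val + 1
          omega⟩ := by
    rintro ⟨⟨A, B⟩, hA, hB, hab, hc⟩
    have key : ∀ m, m < p → ∃ a ∈ A, m ≤ a.val := by
      intro m hm
      by_contra h
      push Not at h
      exact hmin m hm (hU hA (fun i hi => h i hi))
    apply Subtype.ext
    refine Prod.ext ?_ ?_
    · ext i
      constructor
      · exact fun h => h.2
      · intro h
        obtain ⟨a, ha, hi⟩ := key i.val h
        exact ⟨⟨a, ha, Fin.le_def.2 hi⟩, h⟩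
    · ext i
      constructor
      · rintro (⟨b, hb, hi⟩ | h)
        · show p ≤ i.val + 1
          by_contra hlt
          obtain ⟨a, ha, hma⟩ := key (p - 1) (by omega)
          have h1 := Fin.le_def.1 (hab a ha b hb)
          have h2 := Fin.le_def.1 hi
          omega
        · exact h
      · exact fun h => Or.inr h
  refine ⟨G p p le_rfl le_rfl (by omega) x0, ?_⟩
  have hlast : (OrderHom.const P) (G p p le_rfl le_rfl (by omega) x0)
      = G p p le_rfl le_rfl (by omega) := by
    apply OrderHom.ext
    funext x
    exact (hconst x0).trans (hconst x).symm
  have hchain : ∀ d k (hk : p ≤ k), k = p + d →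
      Relation.ReflTransGen (fun f g : P →o P => f ≤ g ∨ g ≤ f)
        (G k k hk le_rfl (by omega)) (G p p le_rfl le_rfl (by omega)) := by
    intro d
    induction d with
    | zero =>
      intro k hk h
      obtain rfl : k = p := by omega
      exact Relation.ReflTransGen.refl
    | succ d ih =>
      intro k hk h
      obtain ⟨m, rfl⟩ : ∃ m, k = m + 1 := ⟨p + d, by omega⟩
      have hm : p ≤ m := by omega
      refine Relation.ReflTransGen.head (b := G m (m+1) hm (by omega) le_rfl) (Or.inr ?_)
        (Relation.ReflTransGen.head (Or.inl ?_) (ih m hm (by omega)))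
      · intro x
        refine ⟨?_, ?_⟩
        · rintro i ⟨h1, h2⟩
          exact ⟨h1, Nat.lt_succ_of_lt h2⟩
        · exact fun i hi => hi
      · intro x
        refine ⟨fun i hi => hi, ?_⟩
        rintro i (h1 | h1)
        · exact Or.inl h1
        · exact Or.inr (Nat.le_of_succ_le h1)
  have h0 := hchain (n - p) n hpn (by omega)
  have h1 : Relation.ReflTransGen (fun f g : P →o P => f ≤ g ∨ g ≤ f)
        OrderHom.id (G p p le_rfl le_rfl (by omega)) := by
    refine Relation.ReflTransGen.head (Or.inl ?_) h0
    intro x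
    refine ⟨?_, ?_⟩
    · exact fun i hi => ⟨⟨i, hi, le_refl i⟩, i.isLt⟩
    · exact fun i hi => Or.inl ⟨i, hi, le_refl i⟩
  rw [← hlast] at h1
  exact h1
end

section
/- Let 𝕄 = {(A,B) ∈ 𝒫 × 𝒫 : A ∠ B}, ordered componentwise by inclusion, and define for 0 ≤ i ≤ n* the maps α_{2i}(A,B) = (A_{<i}, A_{≥i} ∪ B), α_{2i+1}(A,B) = (A_{≤i}, A_{≥i} ∪ B), β_{2i}(A,B) = (A ∪ B_{<i}, B_{≥i}), β_{2i+1}(A,B) = (A ∪ B_{≤i}, B_{≥i}) (where A_{<i} = {a ∈ A : a < i}, etc.). Then: all α_j and β_j map 𝕄 into 𝕄 and are monotone; σ ∘ α_j = σ and σ ∘ β_j = σ where σ(A,B) = A ∪ B; α_0(A,B) = (∅, A ∪ B), α_{2n*}(A,B) = (A,B), β_0(A,B) = (A,B), β_{2n*}(A,B) = (A ∪ B, ∅); and the pointwise inequalities α_{2i} ≤ α_{2i+1} ≥ α_{2i+2} and β_{2i} ≤ β_{2i+1} ≥ β_{2i+2} hold. -/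
/-- `α_{2i}(A,B) = (A_{<i}, A_{≥i} ∪ B)`. -/
def alphaE {n : ℕ} (i : ℕ) (p : Set (Fin n) × Set (Fin n)) : Set (Fin n) × Set (Fin n) :=
  ({a ∈ p.1 | (a : ℕ) < i}, {a ∈ p.1 | i ≤ (a : ℕ)} ∪ p.2)

/-- `α_{2i+1}(A,B) = (A_{≤i}, A_{≥i} ∪ B)`. -/
def alphaO {n : ℕ} (i : ℕ) (p : Set (Fin n) × Set (Fin n)) : Set (Fin n) × Set (Fin n) :=
  ({a ∈ p.1 | (a : ℕ) ≤ i}, {a ∈ p.1 | i ≤ (a : ℕ)} ∪ p.2)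

/-- `β_{2i}(A,B) = (A ∪ B_{<i}, B_{≥i})`. -/
def betaE {n : ℕ} (i : ℕ) (p : Set (Fin n) × Set (Fin n)) : Set (Fin n) × Set (Fin n) :=
  (p.1 ∪ {b ∈ p.2 | (b : ℕ) < i}, {b ∈ p.2 | i ≤ (b : ℕ)})

/-- `β_{2i+1}(A,B) = (A ∪ B_{≤i}, B_{≥i})`. -/
def betaO {n : ℕ} (i : ℕ) (p : Set (Fin n) × Set (Fin n)) : Set (Fin n) × Set (Fin n) :=
  (p.1 ∪ {b ∈ p.2 | (b : ℕ) ≤ i}, {b ∈ p.2 | i ≤ (b : ℕ)})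

theorem stmt12 {n : ℕ} (hn : 1 ≤ n) :
    -- all the maps send 𝕄 into 𝕄 ...
    (∀ i : ℕ, i ≤ n → ∀ p : Set (Fin n) × Set (Fin n), Angle p.1 p.2 →
      Angle (alphaE i p).1 (alphaE i p).2 ∧ Angle (alphaO i p).1 (alphaO i p).2 ∧
      Angle (betaE i p).1 (betaE i p).2 ∧ Angle (betaO i p).1 (betaO i p).2) ∧
    -- ... and are monotone
    (∀ i : ℕ, i ≤ n →
      Monotone (alphaE (n := n) i) ∧ Monotone (alphaO (n := n) i) ∧
      Monotone (betaE (n := n) i) ∧ Monotone (betaO (n := n) i)) ∧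
    -- σ ∘ α_j = σ and σ ∘ β_j = σ
    (∀ i : ℕ, i ≤ n → ∀ p : Set (Fin n) × Set (Fin n),
      (alphaE i p).1 ∪ (alphaE i p).2 = p.1 ∪ p.2 ∧
      (alphaO i p).1 ∪ (alphaO i p).2 = p.1 ∪ p.2 ∧
      (betaE i p).1 ∪ (betaE i p).2 = p.1 ∪ p.2 ∧
      (betaO i p).1 ∪ (betaO i p).2 = p.1 ∪ p.2) ∧
    -- extreme cases
    (∀ p : Set (Fin n) × Set (Fin n),
      alphaE 0 p = (∅, p.1 ∪ p.2) ∧ alphaE n p = p ∧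
      betaE 0 p = p ∧ betaE n p = (p.1 ∪ p.2, ∅)) ∧
    -- inequalities α_{2i} ≤ α_{2i+1} ≥ α_{2i+2} and β_{2i} ≤ β_{2i+1} ≥ β_{2i+2}
    (∀ i : ℕ, ∀ p : Set (Fin n) × Set (Fin n),
      alphaE i p ≤ alphaO i p ∧ alphaE (i + 1) p ≤ alphaO i p ∧
      betaE i p ≤ betaO i p ∧ betaE (i + 1) p ≤ betaO i p) := by
  refine ⟨?_, ?_, ?_, ?_, ?_⟩
  · intro i _ p h
    refine ⟨?_, ?_, ?_, ?_⟩ <;> intro a ha b hb <;> have h1 := h a <;> have h2 := h b <;>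
      simp only [alphaE, alphaO, betaE, betaO, Set.mem_union, Set.mem_ofPred_eq] at ha hb <;>
      grind
  · intro i _
    refine ⟨?_, ?_, ?_, ?_⟩ <;> rintro p q ⟨h1, h2⟩ <;> refine ⟨?_, ?_⟩ <;> intro a ha <;>
      have h3 := @h1 a <;> have h4 := @h2 a <;>
      simp only [alphaE, alphaO, betaE, betaO, Set.mem_union, Set.mem_ofPred_eq] at ha ⊢ <;>
      tauto
  · intro i _ p
    refine ⟨?_, ?_, ?_, ?_⟩ <;> ext a <;> have h := lt_or_ge (a : ℕ) i <;>
      have h' := le_total (a : ℕ) i <;>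
      simp only [alphaE, alphaO, betaE, betaO, Set.mem_union, Set.mem_ofPred_eq] <;>
      tauto
  · rintro ⟨A, B⟩
    refine ⟨?_, ?_, ?_, ?_⟩ <;> simp [alphaE, betaE]
    rintro a ⟨_, h⟩
    exact absurd a.isLt (not_lt.mpr h)
  · intro i p
    refine ⟨?_, ?_, ?_, ?_⟩ <;> refine ⟨?_, ?_⟩ <;> intro a ha <;>
      simp only [alphaE, alphaO, betaE, betaO, Set.mem_union, Set.mem_ofPred_eq] at ha ⊢ <;>
      grind
end

section
/- Let P be a finite poset and p ∈ P. Then the poset {σ ∈ s(P) : max(σ) ≤ p} of nonempty chains whose largest element is at most p, ordered by inclusion, is strongly contractible. (This says the monotone map max : s(P) → P is homotopy cofinal.) -/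
/-- The poset `s(P)` of nonempty chains in `P`, ordered by inclusion. -/
abbrev Chains (P : Type*) [Preorder P] : Type _ :=
  {s : Set P // s.Nonempty ∧ IsChain (· ≤ ·) s}

/-- The poset `{σ ∈ s(P) : max σ ≤ p}` (equivalently, the nonempty chains all of whose
elements are `≤ p`) is strongly contractible; i.e. `max : s(P) → P` is homotopy cofinal. -/
theorem stmt14 {P : Type*} [PartialOrder P] [Fintype P] (p : P) :
    StronglyContractible {σ : Chains P // ∀ x ∈ σ.1, x ≤ p} := by
  let c : {σ : Chains P // ∀ x ∈ σ.1, x ≤ p} :=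
    ⟨⟨{p}, Set.singleton_nonempty p, IsChain.singleton⟩, by
      intro x hx
      exact le_of_eq hx⟩
  let f : {σ : Chains P // ∀ x ∈ σ.1, x ≤ p} →o {σ : Chains P // ∀ x ∈ σ.1, x ≤ p} :=
    { toFun := fun σ => ⟨⟨insert p σ.1.1, Set.insert_nonempty _ _,
        σ.1.2.2.insert (fun b hb _ => Or.inr (σ.2 b hb))⟩, by
          intro x hx
          rcases hx with hx | hx
          · exact le_of_eq hx
          · exact σ.2 x hx⟩
      monotone' := by
        intro σ τ h
        exact Set.insert_subset_insert (show σ.1.1 ⊆ τ.1.1 from h) }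
  refine ⟨c, Relation.ReflTransGen.tail (Relation.ReflTransGen.single (b := f) (Or.inl ?_))
    (Or.inr ?_)⟩
  · intro σ
    exact Set.subset_insert p σ.1.1
  · intro σ
    exact Set.singleton_subset_iff.2 (Set.mem_insert p σ.1.1)
end

section
/- Let 𝒯 be a triangulated category with small coproducts and let 𝒰 be a localising subcategory of 𝒯 (a thick triangulated subcategory closed under small coproducts) such that for every object X of 𝒯 the comma category X/𝒰 (objects: morphisms X → U with U ∈ 𝒰) has a weakly initial set, i.e. a small set S of objects such that every object of X/𝒰 receives a morphism from some member of S. Then the Verdier quotient 𝒯/𝒰 has small hom sets (is locally small). -/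
open CategoryTheory Limits Pretriangulated

universe v u

/-- The class of morphisms whose cone lies in the subcategory of objects satisfying `P`:
inverting these gives the Verdier quotient `𝒯/𝒰`. -/
def coneW (C : Type u) [Category.{v} C] [HasZeroObject C] [Preadditive C] [HasShift C ℤ]
    [∀ n : ℤ, (CategoryTheory.shiftFunctor C n).Additive] [Pretriangulated C]
    (P : C → Prop) : MorphismProperty C := fun X Y f =>
  ∃ (Z : C) (g : Y ⟶ Z) (h : Z ⟶ X⟦(1 : ℤ)⟧),
    Triangle.mk f g h ∈ (distTriang C) ∧ P Z

namespace Stmt15Aux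

section
variable {C : Type u} [Category.{v} C] (ι : C → Type v) (F : ∀ X, ι X → C)
  (p : ∀ X (i : ι X), F X i ⟶ X)

def Idx : ℕ → C → Type v
  | 0, _ => PUnit
  | n + 1, X => Σ i : ι X, Idx n (F X i)

def obj : ∀ (n : ℕ) (X : C), Idx ι F n X → C
  | 0, X, _ => X
  | n + 1, X, a => obj n (F X a.1) a.2

def mp : ∀ (n : ℕ) (X : C) (a : Idx ι F n X), obj ι F n X a ⟶ X
  | 0, X, _ => 𝟙 X
  | n + 1, X, a => mp n (F X a.1) a.2 ≫ p X a.1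

lemma mp_lift (hp : ∀ (X Y : C) (j : ι Y) (f : X ⟶ Y), ∃ (i : ι X) (g : F X i ⟶ F Y j),
      p X i ≫ f = g ≫ p Y j) :
    ∀ (n : ℕ) (X Y : C) (b : Idx ι F n Y) (f : X ⟶ Y), ∃ (a : Idx ι F n X)
      (g : obj ι F n X a ⟶ obj ι F n Y b), mp ι F p n X a ≫ f = g ≫ mp ι F p n Y b
  | 0, X, Y, b, f => ⟨PUnit.unit, f, by
      change 𝟙 X ≫ f = f ≫ 𝟙 Y
      simp⟩
  | n + 1, X, Y, b, f => by
      obtain ⟨i, g, hg⟩ := hp X Y b.1 f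
      obtain ⟨a, g', hg'⟩ := mp_lift hp n _ _ b.2 g
      refine ⟨⟨i, a⟩, g', ?_⟩
      change (mp ι F p n _ a ≫ p X i) ≫ f = g' ≫ mp ι F p n _ b.2 ≫ p Y b.1
      rw [Category.assoc, hg, ← Category.assoc, hg', Category.assoc]

lemma mp_comp (m : ℕ) : ∀ (n : ℕ) (X : C) (a : Idx ι F n X) (b : Idx ι F m (obj ι F n X a)),
    ∃ (k : ℕ) (c : Idx ι F k X) (h : obj ι F k X c ⟶ obj ι F m _ b),
      mp ι F p k X c = h ≫ mp ι F p m _ b ≫ mp ι F p n X a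
  | 0, X, a, b => ⟨m, b, 𝟙 _, by
      change mp ι F p m X b = 𝟙 _ ≫ mp ι F p m X b ≫ 𝟙 X
      simp⟩
  | n + 1, X, a, b => by
      obtain ⟨k, c, h, hc⟩ := mp_comp m n (F X a.1) a.2 b
      refine ⟨k + 1, ⟨a.1, c⟩, h, ?_⟩
      change mp ι F p k _ c ≫ p X a.1 =
        h ≫ mp ι F p m _ b ≫ (mp ι F p n _ a.2 ≫ p X a.1)
      rw [hc]
      simp only [Category.assoc]
      rfl

lemma mp_iso (W : MorphismProperty C) (hW : ∀ X i, W (p X i)) :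
    ∀ (n : ℕ) (X : C) (a : Idx ι F n X), IsIso (W.Q.map (mp ι F p n X a))
  | 0, X, a => by
      change IsIso (W.Q.map (𝟙 X))
      infer_instance
  | n + 1, X, a => by
      change IsIso (W.Q.map (mp ι F p n _ a.2 ≫ p X a.1))
      have := mp_iso W hW n _ a.2
      have := W.Q_inverts _ (hW X a.1)
      rw [Functor.map_comp]
      infer_instance

def QQ (W : MorphismProperty C) (X Y : C) (φ : W.Q.obj X ⟶ W.Q.obj Y) : Prop :=
  ∃ (n : ℕ) (a : Idx ι F n X) (f : obj ι F n _ a ⟶ Y),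
    W.Q.map (mp ι F p n _ a) ≫ φ = W.Q.map f

lemma QQ_comp (W : MorphismProperty C)
    (hlift : ∀ (n : ℕ) (X Y : C) (b : Idx ι F n Y) (f : X ⟶ Y), ∃ (a : Idx ι F n X)
      (g : obj ι F n X a ⟶ obj ι F n Y b), mp ι F p n X a ≫ f = g ≫ mp ι F p n Y b)
    (X Y Z : C) (φ : W.Q.obj X ⟶ W.Q.obj Y) (ψ : W.Q.obj Y ⟶ W.Q.obj Z)
    (h₁ : QQ ι F p W X Y φ) (h₂ : QQ ι F p W Y Z ψ) : QQ ι F p W X Z (φ ≫ ψ) := by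
  obtain ⟨n, a, f, hf⟩ := h₁
  obtain ⟨m, b, g, hg⟩ := h₂
  obtain ⟨a', f', hf'⟩ := hlift m _ _ b f
  obtain ⟨k, c, h, hc⟩ := mp_comp ι F p m n _ a a'
  refine ⟨k, c, h ≫ f' ≫ g, ?_⟩
  have h1 : W.Q.map (mp ι F p m _ a') ≫ W.Q.map f =
      W.Q.map f' ≫ W.Q.map (mp ι F p m _ b) := by
    rw [← Functor.map_comp, hf', Functor.map_comp]
  rw [hc]
  simp only [Functor.map_comp, Category.assoc]
  rw [← hg, reassoc_of% hf, reassoc_of% h1]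

lemma small_QQ (W : MorphismProperty C) (hW : ∀ X i, W (p X i)) (X Y : C)
    (hQ : ∀ φ, QQ ι F p W X Y φ) : Small.{v} (W.Q.obj X ⟶ W.Q.obj Y) := by
  have hi := mp_iso ι F p W hW
  let T := Σ (n : ℕ) (a : Idx ι F n X), (obj ι F n _ a ⟶ Y)
  let G : T → (W.Q.obj X ⟶ W.Q.obj Y) := fun t =>
    inv (W.Q.map (mp ι F p t.1 _ t.2.1)) ≫ W.Q.map t.2.2
  refine small_of_surjective (f := G) ?_
  intro φ
  obtain ⟨n, a, f, hf⟩ := hQ φ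
  refine ⟨⟨n, a, f⟩, ?_⟩
  change inv (W.Q.map (mp ι F p n _ a)) ≫ W.Q.map f = φ
  rw [IsIso.inv_comp_eq]
  exact hf.symm

theorem locSmall (W : MorphismProperty C) (hW : ∀ X i, W (p X i))
    (hl : ∀ (X A B : C) (w : A ⟶ B) (f : X ⟶ B), W w →
      ∃ (i : ι X) (g : F X i ⟶ A), p X i ≫ f = g ≫ w) :
    LocallySmall.{v} W.Localization := by
  have hlift := mp_lift ι F p (fun X Y j f => hl X _ _ (p Y j) f (hW Y j))
  let Q : MorphismProperty W.Localization := fun X Y φ => QQ ι F p W X.as.obj Y.as.obj φ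
  have hQ : Q = ⊤ := by
    have : Q.IsStableUnderComposition :=
      ⟨fun {X Y Z} φ ψ h₁ h₂ => QQ_comp ι F p W hlift _ _ _ φ ψ h₁ h₂⟩
    apply Localization.Construction.morphismProperty_eq_top
    · intro X Y f
      refine ⟨0, PUnit.unit, f, ?_⟩
      change W.Q.map (𝟙 X) ≫ W.Q.map f = W.Q.map f
      simp
    · intro X Y w hw
      obtain ⟨i, g, hg⟩ := hl Y _ _ w (𝟙 Y) hw
      refine ⟨1, ⟨i, PUnit.unit⟩, g, ?_⟩
      change W.Q.map (𝟙 _ ≫ p Y i) ≫ (Localization.Construction.wIso w hw).inv = W.Q.map g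
      rw [Iso.comp_inv_eq]
      change W.Q.map (𝟙 _ ≫ p Y i) = W.Q.map g ≫ W.Q.map w
      rw [← Functor.map_comp, ← hg]
      simp
  refine ⟨fun X Y => small_QQ ι F p W hW X.as.obj Y.as.obj fun φ => ?_⟩
  have : Q (X := X) (Y := Y) φ := by rw [hQ]; trivial
  exact this

end

end Stmt15Aux

/-- If `𝒰` is a localising subcategory (thick triangulated, closed under small coproducts)
of a triangulated category `𝒯` with small coproducts, and every comma category `X/𝒰` has a
weakly initial set, then the Verdier quotient `𝒯/𝒰` is locally small. -/
theorem stmt15 (C : Type u) [Category.{v} C] [HasZeroObject C] [Preadditive C]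
    [HasShift C ℤ] [∀ n : ℤ, (CategoryTheory.shiftFunctor C n).Additive]
    [Pretriangulated C] [HasCoproducts.{v} C]
    (P : C → Prop)
    (hzero : ∀ Z : C, IsZero Z → P Z)
    (hiso : ∀ ⦃X Y : C⦄, (X ≅ Y) → P X → P Y)
    (hshift : ∀ (X : C) (n : ℤ), P X → P (X⟦n⟧))
    (hext : ∀ (T : Triangle C), T ∈ (distTriang C) → P T.obj₁ → P T.obj₃ → P T.obj₂)
    (hretract : ∀ ⦃X Y : C⦄ (i : X ⟶ Y) (r : Y ⟶ X), i ≫ r = 𝟙 X → P Y → P X)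
    (hcoprod : ∀ ⦃α : Type v⦄ (f : α → C), (∀ a, P (f a)) → P (∐ f))
    (hweak : ∀ X : C, ∃ (ι : Type v) (U : ι → C) (e : ∀ i, X ⟶ U i),
      (∀ i, P (U i)) ∧
        ∀ (V : C), P V → ∀ g : X ⟶ V, ∃ (i : ι) (h : U i ⟶ V), e i ≫ h = g) :
    LocallySmall.{v} (coneW C P).Localization := by
  choose ι U e hU he using hweak
  choose F p h hT using fun (X : C) (i : ι X) => distinguished_cocone_triangle₁ (e X i)
  refine Stmt15Aux.locSmall ι F p (coneW C P) (fun X i => ⟨_, _, _, hT X i, hU X i⟩) ?_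
  rintro X A B w f ⟨Z, g, k, hZ, hP⟩
  obtain ⟨i, t, ht⟩ := he X Z hP (f ≫ g)
  have h0 : p X i ≫ e X i = 0 := comp_distTriang_mor_zero₁₂ _ (hT X i)
  obtain ⟨l, hl⟩ := Triangle.coyoneda_exact₂ _ hZ (p X i ≫ f) (by
    change (p X i ≫ f) ≫ g = 0
    rw [Category.assoc, ← ht, ← Category.assoc, h0, zero_comp])
  exact ⟨i, l, hl⟩
end
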